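/- For every nonconstant total Boolean function f : {0,1}^n → {0,1}, the single-bit positive adversary bound equals the single-bit negative adversary bound: Adv₁(f) = Adv₁^±(f). That is, allowing negative entries in the adversary matrix does not increase the single-bit adversary value. -/

import Mathlib

/-!
Replacing an adversary matrix `Γ` by its entrywise absolute value `|Γ|` preserves single-bit
feasibility. It does not decrease the numerator, since `|Γ v| ≤ |Γ| |v|` entrywise. It does not
change the denominator either: `Γ` is supported on pairs at Hamming distance one, so each row `x`
of `Γ ∘ D_i` has at most one nonzero entry, in column `flipBit x i`; hence `Γ ∘ D_i` and
`|Γ| ∘ D_i` send every vector to vectors of the same norm. So every value attained by a real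
matrix is dominated by a value attained by a nonnegative one, and the two suprema agree.
-/

/-- Flip bit `i` of the Boolean string `x`. -/
def flipBit {n : ℕ} (x : Fin n → Bool) (i : Fin n) : Fin n → Bool :=
  Function.update x i (!x i)

/-- Sensitivity of `f` at input `x`. -/
def sensAt {n : ℕ} (f : (Fin n → Bool) → Bool) (x : Fin n → Bool) : ℕ :=
  (Finset.univ.filter fun i : Fin n => f (flipBit x i) ≠ f x).card

/-- (Maximum) sensitivity of `f`. -/
def sens {n : ℕ} (f : (Fin n → Bool) → Bool) : ℕ :=
  Finset.univ.sup (sensAt f)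

/-- `b`-sensitivity of `f`: max sensitivity over inputs with value `b` (0 if none). -/
def sensB {n : ℕ} (f : (Fin n → Bool) → Bool) (b : Bool) : ℕ :=
  (Finset.univ.filter fun x => f x = b).sup (sensAt f)

/-- Adjacency matrix of the sensitivity graph of `f`. -/
def adjMat {n : ℕ} (f : (Fin n → Bool) → Bool) :
    Matrix (Fin n → Bool) (Fin n → Bool) ℝ :=
  fun x y => if (∃ i, y = flipBit x i) ∧ f x ≠ f y then 1 else 0

/-- Spectral norm (ℓ₂ operator norm) of a real matrix. -/
noncomputable def specNorm {m k : Type*} [Fintype m] [Fintype k] [DecidableEq k]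
    (M : Matrix m k ℝ) : ℝ :=
  ‖LinearMap.toContinuousLinearMap (Matrix.toEuclideanLin M)‖

/-- Spectral sensitivity of `f`. -/
noncomputable def specSens {n : ℕ} (f : (Fin n → Bool) → Bool) : ℝ :=
  specNorm (adjMat f)

/-- Degree of `f`: minimal total degree of a real polynomial representing `f` on `{0,1}^n`. -/
noncomputable def bdeg {n : ℕ} (f : (Fin n → Bool) → Bool) : ℕ :=
  sInf {d | ∃ p : MvPolynomial (Fin n) ℝ, p.totalDegree = d ∧
    ∀ x : Fin n → Bool,
      MvPolynomial.eval (fun i => if x i then (1 : ℝ) else 0) p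
        = if f x then 1 else 0}

/-- The matrix `D_i`, with `D_i[x,y] = 1` iff `x` and `y` differ in bit `i`. -/
def Dmat {n : ℕ} (i : Fin n) : Matrix (Fin n → Bool) (Fin n → Bool) ℝ :=
  fun x y => if x i ≠ y i then 1 else 0

/-- Single-bit feasibility: `Γ` is symmetric, not identically zero, and supported on
pairs `(x,y)` with `f(x) ≠ f(y)` and Hamming distance exactly `1`. -/
def SingleBitFeasible {n : ℕ} (f : (Fin n → Bool) → Bool)
    (Γ : Matrix (Fin n → Bool) (Fin n → Bool) ℝ) : Prop :=
  Γ.IsSymm ∧ Γ ≠ 0 ∧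
    ∀ x y, (f x = f y ∨ hammingDist x y ≠ 1) → Γ x y = 0

/-- Single-bit positive adversary bound. -/
noncomputable def Adv1 {n : ℕ} (f : (Fin n → Bool) → Bool) : ℝ :=
  sSup {r | ∃ Γ : Matrix (Fin n → Bool) (Fin n → Bool) ℝ,
    SingleBitFeasible f Γ ∧ (∀ x y, 0 ≤ Γ x y) ∧
    r = specNorm Γ / ⨆ i : Fin n, specNorm (Matrix.hadamard Γ (Dmat i))}

/-- Single-bit negative adversary bound (arbitrary real entries allowed). -/
noncomputable def Adv1pm {n : ℕ} (f : (Fin n → Bool) → Bool) : ℝ :=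
  sSup {r | ∃ Γ : Matrix (Fin n → Bool) (Fin n → Bool) ℝ,
    SingleBitFeasible f Γ ∧
    r = specNorm Γ / ⨆ i : Fin n, specNorm (Matrix.hadamard Γ (Dmat i))}

/-- Comparison principle for spectral norms: every vector `v` is matched with a vector `w` of the
same norm on which `B` acts at least as strongly as `A` does on `v`. -/
theorem specNorm_le_specNorm {m k : Type*} [Fintype m] [Fintype k] [DecidableEq k]
    {A B : Matrix m k ℝ}
    (h : ∀ v : k → ℝ, ∃ w : k → ℝ, ∑ y, w y ^ 2 = ∑ y, v y ^ 2 ∧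
      ∀ x, |(A.mulVec v) x| ≤ |(B.mulVec w) x|) :
    specNorm A ≤ specNorm B := by
  unfold specNorm
  refine ContinuousLinearMap.opNorm_le_bound _ (norm_nonneg _) fun v => ?_
  obtain ⟨w, hw, hAB⟩ := h v.ofLp
  have hnorm : ‖WithLp.toLp 2 w‖ = ‖v‖ := by
    simp [EuclideanSpace.norm_eq, hw]
  have hle : ‖LinearMap.toContinuousLinearMap (Matrix.toEuclideanLin A) v‖ ≤
      ‖LinearMap.toContinuousLinearMap (Matrix.toEuclideanLin B) (WithLp.toLp 2 w)‖ := by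
    rw [EuclideanSpace.norm_eq, EuclideanSpace.norm_eq]
    refine Real.sqrt_le_sqrt (Finset.sum_le_sum fun x _ => ?_)
    exact pow_le_pow_left₀ (norm_nonneg _) (hAB x) 2
  rw [← hnorm]
  exact hle.trans (ContinuousLinearMap.le_opNorm _ _)

theorem specNorm_nonneg' {m k : Type*} [Fintype m] [Fintype k] [DecidableEq k]
    (A : Matrix m k ℝ) : 0 ≤ specNorm A :=
  norm_nonneg _

theorem specNorm_le_specNorm_abs {m k : Type*} [Fintype m] [Fintype k] [DecidableEq k]
    (A : Matrix m k ℝ) : specNorm A ≤ specNorm (A.map abs) := by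
  refine specNorm_le_specNorm fun v => ⟨fun y => |v y|, by simp, fun x => ?_⟩
  simp only [Matrix.mulVec, dotProduct, Matrix.map_apply]
  refine (Finset.abs_sum_le_sum_abs _ _).trans (le_trans (le_of_eq ?_) (le_abs_self _))
  simp [abs_mul]

/-- A matrix whose rows have at most one nonzero entry, in a prescribed column, has spectral norm
depending only on the absolute values of its entries. -/
theorem specNorm_eq_of_row_support {m k : Type*} [Fintype m] [Fintype k] [DecidableEq k]
    {A B : Matrix m k ℝ} (σ : m → k) (hA : ∀ x y, y ≠ σ x → A x y = 0)
    (hB : ∀ x y, y ≠ σ x → B x y = 0) (hAB : ∀ x y, |A x y| = |B x y|) :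
    specNorm A = specNorm B := by
  have key : ∀ v x, |(A.mulVec v) x| = |(B.mulVec v) x| := by
    intro v x
    simp only [Matrix.mulVec, dotProduct]
    rw [Finset.sum_eq_single (σ x) (fun y _ hy => by simp [hA x y hy]) (by simp),
      Finset.sum_eq_single (σ x) (fun y _ hy => by simp [hB x y hy]) (by simp),
      abs_mul, abs_mul, hAB]
  exact le_antisymm (specNorm_le_specNorm fun v => ⟨v, rfl, fun x => (key v x).le⟩)
    (specNorm_le_specNorm fun v => ⟨v, rfl, fun x => (key v x).ge⟩)

theorem eq_flipBit_of_hammingDist {n : ℕ} {x y : Fin n → Bool} {i : Fin n}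
    (h : hammingDist x y = 1) (hi : x i ≠ y i) : y = flipBit x i := by
  obtain ⟨j, hj⟩ := Finset.card_eq_one.mp h
  have mem : ∀ l, x l ≠ y l ↔ l = j := fun l => by
    simpa using Finset.ext_iff.mp hj l
  obtain rfl := (mem i).mp hi
  funext l
  by_cases hl : l = i
  · subst hl
    rw [flipBit, Function.update_self]
    cases hx : x l <;> cases hy : y l <;> simp_all
  · rw [flipBit, Function.update_of_ne hl]
    by_contra hne
    exact hl ((mem l).mp (Ne.symm hne))

theorem SingleBitFeasible.map_abs {n : ℕ} {f : (Fin n → Bool) → Bool}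
    {Γ : Matrix (Fin n → Bool) (Fin n → Bool) ℝ} (h : SingleBitFeasible f Γ) :
    SingleBitFeasible f (Γ.map abs) := by
  obtain ⟨hs, h0, hsupp⟩ := h
  refine ⟨?_, fun hz => h0 ?_, fun x y hxy => ?_⟩
  · ext x y
    simp [hs.apply x y]
  · ext x y
    simpa using congrFun (congrFun hz x) y
  · simp [hsupp x y hxy]

theorem SingleBitFeasible.specNorm_hadamard_abs {n : ℕ} {f : (Fin n → Bool) → Bool}
    {Γ : Matrix (Fin n → Bool) (Fin n → Bool) ℝ} (h : SingleBitFeasible f Γ) (i : Fin n) :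
    specNorm (Matrix.hadamard (Γ.map abs) (Dmat i)) = specNorm (Matrix.hadamard Γ (Dmat i)) := by
  have supp : ∀ x y, y ≠ flipBit x i → Γ x y = 0 ∨ Dmat i x y = 0 := by
    intro x y hy
    by_cases hd : hammingDist x y = 1
    · right
      rw [Dmat, if_neg]
      exact fun hi => hy (eq_flipBit_of_hammingDist hd hi)
    · exact Or.inl (h.2.2 x y (Or.inr hd))
  refine specNorm_eq_of_row_support (fun x => flipBit x i) ?_ ?_ ?_
  · intro x y hy
    rcases supp x y hy with h | h <;> simp [Matrix.hadamard_apply, h]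
  · intro x y hy
    rcases supp x y hy with h | h <;> simp [Matrix.hadamard_apply, h]
  · intro x y
    simp [Matrix.hadamard_apply, abs_mul]

/-- For every nonconstant total Boolean function `f`, the single-bit positive and
negative adversary bounds coincide: `Adv₁(f) = Adv₁^±(f)`. -/
theorem adv1_eq_adv1pm {n : ℕ} (f : (Fin n → Bool) → Bool)
    (hf : ∃ x y, f x ≠ f y) :
    Adv1 f = Adv1pm f := by
  -- Mutual domination of the two sets determines `sSup` even in its junk-valued cases.
  refine csSup_eq_csSup_of_forall_exists_le ?_ ?_
  · rintro r ⟨Γ, hΓ, -, hr⟩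
    exact ⟨r, ⟨Γ, hΓ, hr⟩, le_rfl⟩
  · rintro r ⟨Γ, hΓ, rfl⟩
    refine ⟨_, ⟨Γ.map abs, hΓ.map_abs, fun x y => abs_nonneg _, rfl⟩, ?_⟩
    simp only [hΓ.specNorm_hadamard_abs]
    exact div_le_div_of_nonneg_right (specNorm_le_specNorm_abs Γ)
      (Real.iSup_nonneg fun i => specNorm_nonneg' _)
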